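/- arXiv:2307.14091 — 9 statements merged into one kernel-verified Lean document; each statement's English description precedes it below -/
import Mathlib

section
/- Let x, y, z be real numbers with 0 < x ≤ y ≤ z ≤ 1. Then x^(y−z) · y^(z−x) · z^(x−y) ≥ 1; equivalently, (y−z)·log x + (z−x)·log y + (x−y)·log z ≥ 0. -/
/-!
Since `log` is concave, its graph lies above the chord from `x` to `z`; the logarithmic inequality
is this fact at `y`, multiplied by `z - x` so that it also makes sense when `x = z`.
Exponentiating gives the inequality between powers.
-/

theorem concaveOn_chord_le {𝕜 : Type*} [Field 𝕜] [LinearOrder 𝕜] [IsStrictOrderedRing 𝕜]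
    {s : Set 𝕜} {f : 𝕜 → 𝕜} (hf : ConcaveOn 𝕜 s f) {x y z : 𝕜} (hx : x ∈ s) (hz : z ∈ s)
    (hxy : x ≤ y) (hyz : y ≤ z) :
    (z - y) * f x + (y - x) * f z ≤ (z - x) * f y := by
  rcases hxy.eq_or_lt with rfl | hxy
  · simp
  rcases hyz.eq_or_lt with rfl | hyz
  · simp
  have chord_neg := hf.neg.secant_mono_aux1 hx hz hxy hyz
  simp only [Pi.neg_apply] at chord_neg
  linarith

theorem one_le_prod_rpow_iff {ι : Type*} {s : Finset ι} {x p : ι → ℝ} (hx : ∀ i ∈ s, 0 < x i) :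
    1 ≤ ∏ i ∈ s, x i ^ p i ↔ 0 ≤ ∑ i ∈ s, p i * Real.log (x i) := by
  have rpow_pos : ∀ i ∈ s, 0 < x i ^ p i := fun i hi ↦ Real.rpow_pos_of_pos (hx i hi) _
  rw [← Real.log_nonneg_iff (Finset.prod_pos rpow_pos),
    Real.log_prod fun i hi ↦ (rpow_pos i hi).ne',
    Finset.sum_congr rfl fun i hi ↦ Real.log_rpow (hx i hi) (p i)]

theorem statistical_complexity_aux_lemma_ineq_general
    (x y z : ℝ) (hx : 0 < x) (hxy : x ≤ y) (hyz : y ≤ z) :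
    1 ≤ x ^ (y - z) * y ^ (z - x) * z ^ (x - y) ∧
      0 ≤ (y - z) * Real.log x + (z - x) * Real.log y + (x - y) * Real.log z := by
  have hy : 0 < y := hx.trans_le hxy
  have hz : 0 < z := hy.trans_le hyz
  have log_ineq :
      0 ≤ (y - z) * Real.log x + (z - x) * Real.log y + (x - y) * Real.log z := by
    linarith [concaveOn_chord_le strictConcaveOn_log_Ioi.concaveOn hx hz hxy hyz]
  have pos : ∀ i ∈ Finset.univ, 0 < ![x, y, z] i := by
    simp [Fin.forall_fin_succ, hx, hy, hz]
  have rpow_iff := one_le_prod_rpow_iff (p := ![y - z, z - x, x - y]) pos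
  simp only [Fin.prod_univ_three, Fin.sum_univ_three, Matrix.cons_val] at rpow_iff
  exact ⟨rpow_iff.2 log_ineq, log_ineq⟩

/-- Inequality part of the auxiliary Lemma: for `0 < x ≤ y ≤ z ≤ 1`,
`x^(y−z) · y^(z−x) · z^(x−y) ≥ 1`, equivalently
`(y−z)·log x + (z−x)·log y + (x−y)·log z ≥ 0`. -/
theorem statistical_complexity_aux_lemma_ineq
    (x y z : ℝ) (hx : 0 < x) (hxy : x ≤ y) (hyz : y ≤ z) (hz : z ≤ 1) :
    1 ≤ x ^ (y - z) * y ^ (z - x) * z ^ (x - y) ∧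
      0 ≤ (y - z) * Real.log x + (z - x) * Real.log y + (x - y) * Real.log z :=
  statistical_complexity_aux_lemma_ineq_general x y z hx hxy hyz
end

section
/- Let x, y, z be real numbers with 0 < x ≤ y ≤ z ≤ 1. Then x^(y−z) · y^(z−x) · z^(x−y) = 1 if and only if x = y or y = z. In particular, if x < y and y < z then x^(y−z) · y^(z−x) · z^(x−y) > 1. -/
/-!
After taking logarithms, `x ^ (y - z) * y ^ (z - x) * z ^ (x - y)` becomes twice the signed area
of the triangle inscribed in the graph of `log` over `x`, `y`, `z`. The logarithm is strictly
concave, so three distinct points of its graph are never collinear, and they run clockwise when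
taken from left to right.
-/

section CommRing

variable {R : Type*} [CommRing R]

/-- Minus the determinant of the matrix with rows `(1, x, f x)`, `(1, y, f y)`, `(1, z, f z)`. Over
an ordered field this is twice the signed area of the triangle with vertices `(x, f x)`, `(y, f y)`,
`(z, f z)`, positive when the vertices run clockwise; it measures the concavity of `f`. -/
def graphTriangleArea (f : R → R) (x y z : R) : R :=
  (y - z) * f x + (z - x) * f y + (x - y) * f z

theorem graphTriangleArea_rotate (f : R → R) (x y z : R) :
    graphTriangleArea f y z x = graphTriangleArea f x y z := by
  unfold graphTriangleArea
  ring

theorem graphTriangleArea_swap (f : R → R) (x y z : R) :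
    graphTriangleArea f y x z = -graphTriangleArea f x y z := by
  unfold graphTriangleArea
  ring

theorem graphTriangleArea_self_left (f : R → R) (x z : R) : graphTriangleArea f x x z = 0 := by
  unfold graphTriangleArea
  ring

end CommRing

section StrictConcaveOn

variable {𝕜 : Type*} [Field 𝕜] [LinearOrder 𝕜] [IsStrictOrderedRing 𝕜] {s : Set 𝕜} {f : 𝕜 → 𝕜}
  {x y z : 𝕜}

theorem graphTriangleArea_pos_of_strictConcaveOn (hf : StrictConcaveOn 𝕜 s f) (hx : x ∈ s)
    (hz : z ∈ s) (hxy : x < y) (hyz : y < z) : 0 < graphTriangleArea f x y z := by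
  have slope_lt : (f z - f y) / (z - y) < (f y - f x) / (y - x) :=
    hf.slope_anti_adjacent hx hz hxy hyz
  rw [div_lt_div_iff₀ (sub_pos.2 hyz) (sub_pos.2 hxy)] at slope_lt
  unfold graphTriangleArea
  linarith

theorem graphTriangleArea_ne_zero_of_strictConcaveOn (hf : StrictConcaveOn 𝕜 s f) (hx : x ∈ s)
    (hy : y ∈ s) (hz : z ∈ s) (hxy : x ≠ y) (hyz : y ≠ z) (hzx : z ≠ x) :
    graphTriangleArea f x y z ≠ 0 := by
  wlog hlt : x < y generalizing x y
  · rw [← neg_ne_zero, ← graphTriangleArea_swap]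
    exact this hy hx hxy.symm hzx.symm hyz.symm (hxy.symm.lt_of_le (not_lt.1 hlt))
  rcases hzx.lt_or_gt with hzx | hxz
  · rw [← graphTriangleArea_rotate, ← graphTriangleArea_rotate]
    exact (graphTriangleArea_pos_of_strictConcaveOn hf hz hy hzx hlt).ne'
  rcases hyz.lt_or_gt with hyz | hzy
  · exact (graphTriangleArea_pos_of_strictConcaveOn hf hx hz hlt hyz).ne'
  · rw [← graphTriangleArea_rotate, ← neg_ne_zero, ← graphTriangleArea_swap,
      ← graphTriangleArea_rotate, ← graphTriangleArea_rotate]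
    exact (graphTriangleArea_pos_of_strictConcaveOn hf hx hy hxz hzy).ne'

theorem graphTriangleArea_eq_zero_iff_of_strictConcaveOn (hf : StrictConcaveOn 𝕜 s f)
    (hx : x ∈ s) (hy : y ∈ s) (hz : z ∈ s) :
    graphTriangleArea f x y z = 0 ↔ x = y ∨ y = z ∨ z = x := by
  constructor
  · contrapose!
    rintro ⟨hxy, hyz, hzx⟩
    exact graphTriangleArea_ne_zero_of_strictConcaveOn hf hx hy hz hxy hyz hzx
  · rintro (rfl | rfl | rfl)
    · exact graphTriangleArea_self_left f x z
    · rw [← graphTriangleArea_rotate, graphTriangleArea_self_left]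
    · rw [graphTriangleArea_rotate, graphTriangleArea_self_left]

end StrictConcaveOn

theorem rpow_sub_mul_rpow_sub_mul_rpow_sub_eq_exp {x y z : ℝ} (hx : 0 < x) (hy : 0 < y)
    (hz : 0 < z) :
    x ^ (y - z) * y ^ (z - x) * z ^ (x - y) = Real.exp (graphTriangleArea Real.log x y z) := by
  simp only [graphTriangleArea, Real.exp_add, Real.rpow_def_of_pos, hx, hy, hz, mul_comm]

theorem statistical_complexity_aux_lemma_eq_general {x y z : ℝ} (hx : 0 < x) (hy : 0 < y)
    (hz : 0 < z) :
    (x ^ (y - z) * y ^ (z - x) * z ^ (x - y) = 1 ↔ x = y ∨ y = z ∨ z = x) ∧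
      (x < y → y < z → 1 < x ^ (y - z) * y ^ (z - x) * z ^ (x - y)) := by
  rw [rpow_sub_mul_rpow_sub_mul_rpow_sub_eq_exp hx hy hz, Real.exp_eq_one_iff,
    Real.one_lt_exp_iff]
  exact ⟨graphTriangleArea_eq_zero_iff_of_strictConcaveOn strictConcaveOn_log_Ioi hx hy hz,
    graphTriangleArea_pos_of_strictConcaveOn strictConcaveOn_log_Ioi hx hz⟩

/-- Equality characterization in the auxiliary Lemma: for `0 < x ≤ y ≤ z ≤ 1`,
`x^(y−z) · y^(z−x) · z^(x−y) = 1` iff `x = y` or `y = z`; in particular the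
product is `> 1` when `x < y` and `y < z`. -/
theorem statistical_complexity_aux_lemma_eq
    (x y z : ℝ) (hx : 0 < x) (hxy : x ≤ y) (hyz : y ≤ z) (hz : z ≤ 1) :
    (x ^ (y - z) * y ^ (z - x) * z ^ (x - y) = 1 ↔ x = y ∨ y = z) ∧
      (x < y → y < z → 1 < x ^ (y - z) * y ^ (z - x) * z ^ (x - y)) := by
  have hy : 0 < y := hx.trans_le hxy
  have eq_of_ends_eq : z = x → y = z := fun hzx => hyz.antisymm (hzx.trans_le hxy)
  simpa only [or_iff_left_of_imp eq_of_ends_eq] using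
    statistical_complexity_aux_lemma_eq_general hx hy (hy.trans_le hyz)
end

section
/- Let a, b, c be real numbers with 0 < a ≤ 1, 0 < b ≤ 1, 0 < c ≤ 1. If a^(c−b) · b^(a−c) · c^(b−a) = 1, then at least two of a, b, c are equal (a = b or b = c or a = c). -/
/-!
Taking logarithms turns the equation into the collinearity of the points `(a, log a)`,
`(b, log b)`, `(c, log c)`, and a strictly concave graph contains no three distinct collinear
points, because the slope of the secant through a fixed point of the graph is injective.
-/

section StrictConcave

variable {𝕜 : Type*} [Field 𝕜] [LinearOrder 𝕜] [IsStrictOrderedRing 𝕜] {s : Set 𝕜} {f : 𝕜 → 𝕜}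

lemma strictAntiOn_slope_of_strictConcaveOn (hf : StrictConcaveOn 𝕜 s f) {a : 𝕜} (ha : a ∈ s) :
    StrictAntiOn (slope f a) (s \ {a}) := by
  intro x hx y hy hxy
  simpa only [slope_def_field] using hf.secant_strict_mono ha hx.1 hy.1 hx.2 hy.2 hxy

lemma cyclic_sum_sub_mul_eq_zero_iff_of_strictConcaveOn (hf : StrictConcaveOn 𝕜 s f) {a b c : 𝕜}
    (ha : a ∈ s) (hb : b ∈ s) (hc : c ∈ s) :
    (c - b) * f a + (a - c) * f b + (b - a) * f c = 0 ↔ a = b ∨ b = c ∨ a = c := by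
  constructor
  · intro hsum
    by_contra! ⟨hab, hbc, hac⟩
    have slope_eq : slope f a b = slope f a c := by
      rw [slope_def_field, slope_def_field,
        div_eq_div_iff (sub_ne_zero.2 hab.symm) (sub_ne_zero.2 hac.symm)]
      linear_combination -hsum
    exact hbc <| (strictAntiOn_slope_of_strictConcaveOn hf ha).injOn
      ⟨hb, hab.symm⟩ ⟨hc, hac.symm⟩ slope_eq
  · rintro (rfl | rfl | rfl) <;> ring

end StrictConcave

lemma rpow_mul_rpow_mul_rpow_eq_exp {a b c : ℝ} (ha : 0 < a) (hb : 0 < b) (hc : 0 < c)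
    (x y z : ℝ) :
    a ^ x * b ^ y * c ^ z = Real.exp (x * Real.log a + y * Real.log b + z * Real.log c) := by
  simp only [Real.rpow_def_of_pos, ha, hb, hc, Real.exp_add, mul_comm (Real.log _)]

theorem stationarity_equation_two_equal_general {a b c : ℝ}
    (ha : 0 < a) (hb : 0 < b) (hc : 0 < c) :
    a ^ (c - b) * b ^ (a - c) * c ^ (b - a) = 1 ↔ a = b ∨ b = c ∨ a = c := by
  rw [rpow_mul_rpow_mul_rpow_eq_exp ha hb hc, Real.exp_eq_one_iff]
  exact cyclic_sum_sub_mul_eq_zero_iff_of_strictConcaveOn strictConcaveOn_log_Ioi ha hb hc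

/-- Applied form of the auxiliary Lemma: if `0 < a, b, c ≤ 1` and
`a^(c−b) · b^(a−c) · c^(b−a) = 1`, then at least two of `a, b, c` coincide. -/
theorem stationarity_equation_two_equal
    (a b c : ℝ) (ha0 : 0 < a) (ha1 : a ≤ 1) (hb0 : 0 < b) (hb1 : b ≤ 1)
    (hc0 : 0 < c) (hc1 : c ≤ 1)
    (h : a ^ (c - b) * b ^ (a - c) * c ^ (b - a) = 1) :
    a = b ∨ b = c ∨ a = c :=
  (stationarity_equation_two_equal_general ha0 hb0 hc0).1 h
end

section
/- Let N ≥ 3 and let p = (p_1, …, p_N) be a vector of real numbers with 0 < p_i < 1 for all i and ∑_{i=1}^N p_i = 1. Define the normalized Shannon entropy H(p) = −(1/log N)·∑_{i=1}^N p_i·log p_i and the disequilibrium D(p) = ∑_{i=1}^N (p_i − 1/N)². Suppose D(p) > 0 and that the stationarity equations (1/log N)·(log p_N − log p_i)·D(p) + 2·H(p)·(p_i − p_N) = 0 hold for every i = 1, …, N−1. Then the set of values {p_1, …, p_N} contains at most two distinct elements. -/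
/-!
Up to the scalars `log N ≠ 0` and `D ≠ 0`, stationarity says that the points `(p i, log (p i))` lie
on the line of slope `2 * H * log N / D` through `(p_N, log p_N)`, and a line meets the graph of a
strictly concave function at most twice.
-/

section StrictConcave

variable {𝕜 E β : Type*} [Field 𝕜] [LinearOrder 𝕜] [IsStrictOrderedRing 𝕜]
  [AddCommGroup E] [Module 𝕜 E] [LinearOrder β] {s t : Set E} {f g : E → β}

theorem min_lt_of_strictConcaveOn_of_sbtw [AddCommMonoid β] [IsOrderedAddMonoid β] [Module 𝕜 β]
    [PosSMulStrictMono 𝕜 β] (hf : StrictConcaveOn 𝕜 s f) {x y z : E}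
    (hx : x ∈ s) (hz : z ∈ s) (h : Sbtw 𝕜 x y z) : min (f x) (f z) < f y := by
  refine hf.lt_on_openSegment hx hz h.left_ne_right ?_
  rw [openSegment_eq_image_lineMap]
  exact h.mem_image_Ioo

theorem exists_subset_pair_of_eqOn_of_strictConcaveOn_of_convexOn [AddCommGroup β]
    [IsOrderedAddMonoid β] [Module 𝕜 β] [PosSMulStrictMono 𝕜 β] (hf : StrictConcaveOn 𝕜 s f)
    (hg : ConvexOn 𝕜 s g) (ht : Collinear 𝕜 t) (hts : t ⊆ s) (hfg : t.EqOn f g) :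
    ∃ a b, t ⊆ {a, b} := by
  have not_sbtw {x y z : E} (hx : x ∈ t) (hy : y ∈ t) (hz : z ∈ t) : ¬ Sbtw 𝕜 x y z := fun h ↦ by
    have hlt := min_lt_of_strictConcaveOn_of_sbtw (hf.sub_convexOn hg) (hts hx) (hts hz) h
    simp [hfg hx, hfg hy, hfg hz] at hlt
  obtain hsub | ⟨a, ha, b, hb, hab⟩ := t.subsingleton_or_nontrivial
  · obtain rfl | ⟨a, rfl⟩ := hsub.eq_empty_or_singleton
    · exact ⟨0, 0, Set.empty_subset _⟩
    · exact ⟨a, a, by simp⟩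
  refine ⟨a, b, fun x hx ↦ ?_⟩
  by_contra hxab
  obtain ⟨hxa, hxb⟩ : x ≠ a ∧ x ≠ b := by simpa using hxab
  have hcol : Collinear 𝕜 {a, b, x} := ht.subset (by simp [Set.insert_subset_iff, ha, hb, hx])
  obtain h | h | h := hcol.wbtw_or_wbtw_or_wbtw
  · exact not_sbtw ha hb hx ⟨h, hab.symm, hxb.symm⟩
  · exact not_sbtw hb hx ha ⟨h, hxb, hxa⟩
  · exact not_sbtw hx ha hb ⟨h, hxa.symm, hab⟩

end StrictConcave

theorem collinear_set_divisionRing {𝕜 : Type*} [DivisionRing 𝕜] (t : Set 𝕜) : Collinear 𝕜 t :=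
  (collinear_iff_exists_forall_eq_smul_vadd t).2 ⟨0, 1, fun x _ ↦ ⟨x, by simp⟩⟩

theorem CSQ_stationary_two_values_general {ι : Type*} {p : ι → ℝ} (hp : ∀ i, 0 < p i)
    {α : ℝ} (hα : α ≠ 0) (β : ℝ) (k : ι)
    (hstat : ∀ i ≠ k, α * (Real.log (p k) - Real.log (p i)) + β * (p i - p k) = 0) :
    ∃ a b : ℝ, ∀ i, p i = a ∨ p i = b := by
  let line (x : ℝ) : ℝ := β / α * x + (Real.log (p k) - β / α * p k)
  have hconvex : ConvexOn ℝ (Set.Ioi 0) line :=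
    ((LinearMap.mulLeft ℝ (β / α)).convexOn (convex_Ioi 0)).add_const _
  have hlog : (Set.range p).EqOn Real.log line := by
    rintro _ ⟨i, rfl⟩
    obtain rfl | hi := eq_or_ne i k
    · simp [line]
    · simp only [line]
      field_simp
      linear_combination -hstat i hi
  obtain ⟨a, b, hab⟩ := exists_subset_pair_of_eqOn_of_strictConcaveOn_of_convexOn
    strictConcaveOn_log_Ioi hconvex (collinear_set_divisionRing _) (Set.range_subset_iff.2 hp) hlog
  exact ⟨a, b, Set.range_subset_iff.1 hab⟩

open Finset in
/-- If a strictly interior distribution `p` on `N ≥ 3` points with positive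
disequilibrium satisfies the first-order stationarity conditions of the
statistical complexity `C_SQ = H · D` (with `p_N` eliminated), then `p` takes
at most two distinct values. -/
theorem CSQ_stationary_two_values
    (N : ℕ) (hN : 3 ≤ N) (p : Fin N → ℝ)
    (hp0 : ∀ i, 0 < p i) (hp1 : ∀ i, p i < 1)
    (hsum : ∑ i, p i = 1)
    (D : ℝ) (hD : D = ∑ i, (p i - 1 / N) ^ 2)
    (H : ℝ) (hH : H = -(1 / Real.log N) * ∑ i, p i * Real.log (p i))
    (hDpos : 0 < D)
    (hstat : ∀ i : Fin N, (i : ℕ) ≠ N - 1 →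
      (1 / Real.log N) * (Real.log (p ⟨N - 1, by omega⟩) - Real.log (p i)) * D
        + 2 * H * (p i - p ⟨N - 1, by omega⟩) = 0) :
    ∃ a b : ℝ, ∀ i, p i = a ∨ p i = b := by
  have hlogN : Real.log N ≠ 0 := (Real.log_pos (by exact_mod_cast (by omega : 1 < N))).ne'
  exact CSQ_stationary_two_values_general hp0 (mul_ne_zero (one_div_ne_zero hlogN) hDpos.ne')
    (2 * H) ⟨N - 1, by omega⟩ fun i hi ↦ by linear_combination hstat i fun h ↦ hi (Fin.ext h)
end

section
/- Fix t with 0 < t < 1. For each integer N ≥ 2 let p^N be the discrete probability distribution on N points with p^N_N = t and p^N_i = (1−t)/(N−1) for i = 1, …, N−1. Then C_SQ(p^N) converges to (1−t)·t² as N → ∞. Moreover, for all t ∈ [0,1] one has (1−t)·t² ≤ 4/27, with equality if and only if t = 2/3. -/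
/-!
The Shannon entropy of a one-spike distribution on `n` points with spike `t` is the `n`-ary entropy
`(1 - t) log (n - 1) + h(t)`, where the binary entropy `h(t)` does not depend on `n`; dividing by
`log n` leaves `1 - t` in the limit. Since the deviations from `1 / n` sum to zero, the
disequilibrium is `n / (n - 1) * (t - 1 / n) ^ 2`, which tends to `t ^ 2`. The maximum of the
limiting cubic is read off from `4 / 27 - (1 - t) t² = (t - 2 / 3)² (t + 1 / 3)`.
-/

section

open Filter Real Topology

theorem tendsto_log_sub_one_div_log_atTop :
    Tendsto (fun x : ℝ => log (x - 1) / log x) atTop (𝓝 1) := by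
  have hdiff : Tendsto (fun x : ℝ => (log (x + -1) - log x) / log x + 1) atTop (𝓝 (0 + 1)) :=
    ((tendsto_log_comp_add_sub_log (-1)).div_atTop tendsto_log_atTop).add_const 1
  rw [zero_add] at hdiff
  refine hdiff.congr' ?_
  filter_upwards [eventually_gt_atTop 1] with x hx
  have hlog : log x ≠ 0 := (log_pos hx).ne'
  rw [← sub_eq_add_neg, sub_div, div_self hlog, sub_add_cancel]

theorem tendsto_qaryEntropy_div_log_atTop (p : ℝ) :
    Tendsto (fun q : ℕ => qaryEntropy q p / log q) atTop (𝓝 p) := by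
  have hcast : Tendsto (fun q : ℕ => (q : ℝ)) atTop atTop := tendsto_natCast_atTop_atTop
  have hlog : Tendsto (fun q : ℕ => log ((q : ℝ) - 1) / log q) atTop (𝓝 1) :=
    tendsto_log_sub_one_div_log_atTop.comp hcast
  have hbin : Tendsto (fun q : ℕ => binEntropy p / log q) atTop (𝓝 0) :=
    (tendsto_log_atTop.comp hcast).const_div_atTop _
  simpa only [qaryEntropy, Int.cast_sub, Int.cast_natCast, Int.cast_one, add_div, mul_div_assoc,
    mul_one, add_zero] using (hlog.const_mul p).add hbin

theorem tendsto_div_sub_one_mul_sub_inv_sq_atTop (t : ℝ) :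
    Tendsto (fun x : ℝ => x / (x - 1) * (t - 1 / x) ^ 2) atTop (𝓝 (t ^ 2)) := by
  have hinv : Tendsto (fun x : ℝ => 1 / x) atTop (𝓝 0) := tendsto_const_nhds.div_atTop tendsto_id
  have hratio : Tendsto (fun x : ℝ => x / (x - 1)) atTop (𝓝 1) := by
    have hlim : Tendsto (fun x : ℝ => (1 - 1 / x)⁻¹) atTop (𝓝 (1 - 0)⁻¹) :=
      (hinv.const_sub 1).inv₀ (by norm_num)
    rw [sub_zero, inv_one] at hlim
    refine hlim.congr' ?_
    filter_upwards [eventually_ne_atTop 0] with x hx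
    rw [one_sub_div hx, inv_div]
  simpa only [sub_zero, one_mul] using hratio.mul ((hinv.const_sub t).pow 2)

section Complexity

variable {ι : Type*} [Fintype ι]

/-- The Shannon entropy `H(p)` divided by the entropy `log N` of the uniform distribution on the `N`
points of `ι`; the convention `0 * log 0 = 0` is built into `Real.negMulLog`. -/
noncomputable def normalizedEntropy (p : ι → ℝ) : ℝ :=
  (∑ i, negMulLog (p i)) / log (Fintype.card ι)

/-- The disequilibrium `D_SQ(p)`: the squared Euclidean distance from `p` to the uniform
distribution. -/
noncomputable def disequilibrium (p : ι → ℝ) : ℝ :=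
  ∑ i, (p i - 1 / Fintype.card ι) ^ 2

/-- The statistical complexity `C_SQ(p)`, which vanishes both for the uniform distribution and for
point masses. -/
noncomputable def statisticalComplexity (p : ι → ℝ) : ℝ :=
  normalizedEntropy p * disequilibrium p

variable [DecidableEq ι]

/-- The one-spike distribution: mass `t` at `a`, the remaining mass `1 - t` spread evenly over the
other points. On a one-point type it is constantly `t`, so it has total mass one only if `t = 1`. -/
noncomputable def oneSpike (a : ι) (t : ℝ) (i : ι) : ℝ :=
  if i = a then t else (1 - t) / (Fintype.card ι - 1)

theorem sum_comp_oneSpike (f : ℝ → ℝ) (a : ι) (t : ℝ) :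
    ∑ i, f (oneSpike a t i) =
      f t + (Fintype.card ι - 1) * f ((1 - t) / (Fintype.card ι - 1)) := by
  have hcard : 1 ≤ Fintype.card ι := Fintype.card_pos_iff.mpr ⟨a⟩
  simp only [oneSpike, apply_ite f, Finset.sum_ite, Finset.filter_eq', Finset.filter_ne',
    Finset.mem_univ, if_true, Finset.sum_const, Finset.card_singleton,
    Finset.card_erase_of_mem, Finset.card_univ, nsmul_eq_mul, Nat.cast_sub hcard,
    Nat.cast_one, one_mul]

variable [Nontrivial ι]

theorem sum_negMulLog_oneSpike (a : ι) (t : ℝ) :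
    ∑ i, negMulLog (oneSpike a t i) = qaryEntropy (Fintype.card ι) (1 - t) := by
  have hcard : (Fintype.card ι : ℝ) - 1 ≠ 0 :=
    (sub_pos.mpr (Nat.one_lt_cast.mpr Fintype.one_lt_card)).ne'
  rw [sum_comp_oneSpike negMulLog, div_eq_mul_inv, negMulLog_mul, qaryEntropy, binEntropy_one_sub,
    binEntropy_eq_negMulLog_add_negMulLog_one_sub]
  simp only [negMulLog, log_inv, Int.cast_sub, Int.cast_natCast, Int.cast_one]
  field_simp
  ring

theorem disequilibrium_oneSpike (a : ι) (t : ℝ) :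
    disequilibrium (oneSpike a t) =
      Fintype.card ι / (Fintype.card ι - 1) * (t - 1 / Fintype.card ι) ^ 2 := by
  have hcard : (1 : ℝ) < Fintype.card ι := Nat.one_lt_cast.mpr Fintype.one_lt_card
  have hcard_sub : (Fintype.card ι : ℝ) - 1 ≠ 0 := (sub_pos.mpr hcard).ne'
  rw [disequilibrium, sum_comp_oneSpike (fun x => (x - 1 / Fintype.card ι) ^ 2)]
  field_simp
  ring

theorem statisticalComplexity_oneSpike (a : ι) (t : ℝ) :
    statisticalComplexity (oneSpike a t) =
      qaryEntropy (Fintype.card ι) (1 - t) / log (Fintype.card ι) *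
        (Fintype.card ι / (Fintype.card ι - 1) * (t - 1 / Fintype.card ι) ^ 2) := by
  rw [statisticalComplexity, normalizedEntropy, sum_negMulLog_oneSpike, disequilibrium_oneSpike]

end Complexity

theorem tendsto_statisticalComplexity_oneSpike {κ : Type*} {l : Filter κ} {ι : κ → Type*}
    [∀ k, Fintype (ι k)] [∀ k, DecidableEq (ι k)]
    (hcard : Tendsto (fun k => Fintype.card (ι k)) l atTop) (a : ∀ k, ι k) (t : ℝ) :
    Tendsto (fun k => statisticalComplexity (oneSpike (a k) t)) l (𝓝 ((1 - t) * t ^ 2)) := by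
  have hnat : Tendsto (fun n : ℕ => qaryEntropy n (1 - t) / log n *
      ((n : ℝ) / (n - 1) * (t - 1 / n) ^ 2)) atTop (𝓝 ((1 - t) * t ^ 2)) :=
    (tendsto_qaryEntropy_div_log_atTop (1 - t)).mul
      ((tendsto_div_sub_one_mul_sub_inv_sq_atTop t).comp tendsto_natCast_atTop_atTop)
  refine (hnat.comp hcard).congr' ?_
  filter_upwards [hcard.eventually_gt_atTop 1] with k hk
  have : Nontrivial (ι k) := Fintype.one_lt_card_iff_nontrivial.mp hk
  exact (statisticalComplexity_oneSpike (a k) t).symm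

theorem four_div_twentySeven_sub_one_sub_mul_sq (s : ℝ) :
    4 / 27 - (1 - s) * s ^ 2 = (s - 2 / 3) ^ 2 * (s + 1 / 3) := by
  ring

theorem one_sub_mul_sq_le {s : ℝ} (hs : -(1 / 3) ≤ s) : (1 - s) * s ^ 2 ≤ 4 / 27 := by
  have hs' : 0 ≤ s + 1 / 3 := neg_le_iff_add_nonneg.mp hs
  rw [← sub_nonneg, four_div_twentySeven_sub_one_sub_mul_sq]
  positivity

theorem one_sub_mul_sq_eq_iff {s : ℝ} (hs : -(1 / 3) < s) :
    (1 - s) * s ^ 2 = 4 / 27 ↔ s = 2 / 3 := by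
  have hs' : s + 1 / 3 ≠ 0 := (neg_lt_iff_pos_add.mp hs).ne'
  rw [eq_comm, ← sub_eq_zero, four_div_twentySeven_sub_one_sub_mul_sq, mul_eq_zero_iff_right hs',
    sq_eq_zero_iff, sub_eq_zero]

end

open Finset in
/-- For fixed `t ∈ (0,1)`, the complexity `C_SQ` of the one-spike distribution
`p^N = (…, (1−t)/(N−1), …, t)` tends to `(1−t)·t²` as `N → ∞`; moreover
`(1−t)·t² ≤ 4/27` on `[0,1]`, with equality iff `t = 2/3`. -/
theorem CSQ_one_spike_limit (t : ℝ) (ht0 : 0 < t) (ht1 : t < 1) :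
    Filter.Tendsto
      (fun N : ℕ =>
        (-(1 / Real.log N) * ∑ i : Fin N,
            (if (i : ℕ) = N - 1 then t else (1 - t) / (N - 1)) *
              Real.log (if (i : ℕ) = N - 1 then t else (1 - t) / (N - 1))) *
          (∑ i : Fin N,
            ((if (i : ℕ) = N - 1 then t else (1 - t) / (N - 1)) - 1 / N) ^ 2))
      Filter.atTop (nhds ((1 - t) * t ^ 2)) ∧
    ∀ s : ℝ, 0 ≤ s → s ≤ 1 →
      (1 - s) * s ^ 2 ≤ 4 / 27 ∧ ((1 - s) * s ^ 2 = 4 / 27 ↔ s = 2 / 3) := by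
  refine ⟨?_, fun s hs _ => ⟨one_sub_mul_sq_le (by linarith), one_sub_mul_sq_eq_iff (by linarith)⟩⟩
  have hcard : Filter.Tendsto (fun n : ℕ => Fintype.card (Fin (n + 1))) Filter.atTop
      Filter.atTop := by
    simpa only [Fintype.card_fin] using Filter.tendsto_add_atTop_nat 1
  rw [← Filter.tendsto_add_atTop_iff_nat 1]
  refine (tendsto_statisticalComplexity_oneSpike hcard Fin.last t).congr fun n => ?_
  simp only [statisticalComplexity, normalizedEntropy, disequilibrium, oneSpike,
    Real.negMulLog_eq_neg, Finset.sum_neg_distrib, Fintype.card_fin, Fin.ext_iff, Fin.val_last,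
    Nat.add_sub_cancel]
  ring
end

section
/- Let N ≥ 2, let K be an integer with 1 ≤ K ≤ N−1, let 0 ≤ p_max ≤ 1, and set ω = K/N. Let p be the discrete probability distribution on N points with p_i = (1−p_max)/K for i = 1, …, K and p_i = p_max/(N−K) for i = K+1, …, N. Then the disequilibrium D_SQ(p) = ∑_{i=1}^N (p_i − 1/N)² equals (1/N)·(p_max + ω − 1)² / (ω·(1−ω)). -/
/-!
The deviations from the uniform distribution sum to zero, so they are governed by a single number,
the excess mass `δ = p_max - (1 - ω)` of the high level: they equal `-δ / K` at each of the `K` low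
points and `δ / (N - K)` at each of the `N - K` high points. Hence
`D_SQ = δ² / K + δ² / (N - K)`, and `1 / K + 1 / (N - K) = 1 / (N * ω * (1 - ω))`.
-/

section Field

variable {𝕜 : Type*} [Field 𝕜] {n k : 𝕜}

theorem one_sub_div_sub_one_div (hn : n ≠ 0) (hk : k ≠ 0) (m : 𝕜) :
    (1 - m) / k - 1 / n = -(m + k / n - 1) / k := by
  field_simp
  ring

theorem div_sub_sub_one_div (hn : n ≠ 0) (hnk : n - k ≠ 0) (m : 𝕜) :
    m / (n - k) - 1 / n = (m + k / n - 1) / (n - k) := by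
  field_simp
  ring

theorem one_div_add_one_div_sub (hn : n ≠ 0) (hk : k ≠ 0) (hnk : n - k ≠ 0) :
    1 / k + 1 / (n - k) = 1 / n / (k / n * (1 - k / n)) := by
  have one_sub_ratio : 1 - k / n = (n - k) / n := by rw [sub_div, div_self hn]
  rw [one_sub_ratio]
  field_simp
  ring

end Field

open Finset in
theorem sum_ite_const_const {ι R : Type*} [Fintype ι] [Ring R] (q : ι → Prop) [DecidablePred q]
    (a b : R) :
    ∑ i, (if q i then a else b) = #{i | q i} * a + (Fintype.card ι - #{i | q i}) * b := by
  have card_add_card : (#{i | q i} + #{i | ¬ q i} : R) = Fintype.card ι := by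
    rw [← Nat.cast_add, card_filter_add_card_filter_not, card_univ]
  rw [sum_ite, sum_const, sum_const, nsmul_eq_mul, nsmul_eq_mul, ← card_add_card,
    add_sub_cancel_left]

open Finset in
theorem DSQ_two_level_family_general {ι 𝕜 : Type*} [Fintype ι] [Field 𝕜] [CharZero 𝕜]
    (low : ι → Prop) [DecidablePred low] {N K : ℕ} (hN : Fintype.card ι = N)
    (hK : #{i | low i} = K) (hK0 : 0 < K) (hKN : K < N)
    (pmax ω : 𝕜) (hω : ω = K / N)
    (p : ι → 𝕜) (hp : ∀ i, p i = if low i then (1 - pmax) / K else pmax / (N - K)) :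
    ∑ i, (p i - 1 / N) ^ 2 = (1 / N) * (pmax + ω - 1) ^ 2 / (ω * (1 - ω)) := by
  have hk : (K : 𝕜) ≠ 0 := Nat.cast_ne_zero.mpr hK0.ne'
  have hn : (N : 𝕜) ≠ 0 := Nat.cast_ne_zero.mpr (hK0.trans hKN).ne'
  have hnk : (N - K : 𝕜) ≠ 0 := sub_ne_zero.mpr (Nat.cast_injective.ne hKN.ne')
  set δ := pmax + ω - 1 with hδ
  have deviation (i : ι) : p i - 1 / N = if low i then -δ / K else δ / (N - K) := by
    rw [hp, hδ, hω, ← one_sub_div_sub_one_div hn hk, ← div_sub_sub_one_div hn hnk, ite_sub]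
  calc ∑ i, (p i - 1 / N) ^ 2
      = ∑ i, if low i then (-δ / K) ^ 2 else (δ / (N - K)) ^ 2 := by
        simp only [deviation, ite_pow]
    _ = K * (-δ / K) ^ 2 + (N - K) * (δ / (N - K)) ^ 2 := by rw [sum_ite_const_const, hK, hN]
    _ = δ ^ 2 * (1 / K + 1 / (N - K)) := by field_simp
    _ = (1 / N) * δ ^ 2 / (ω * (1 - ω)) := by
        rw [one_div_add_one_div_sub hn hk hnk, ← hω]
        ring

open Finset in
/-- The disequilibrium `D_SQ` of the two-level distribution (first `K`
components equal to `(1−p_max)/K`, remaining `N−K` components equal to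
`p_max/(N−K)`) equals `(1/N)·(p_max + ω − 1)²/(ω·(1−ω))` with `ω = K/N`. -/
theorem DSQ_two_level_family
    (N K : ℕ) (hN : 2 ≤ N) (hK1 : 1 ≤ K) (hKN : K ≤ N - 1)
    (pmax : ℝ) (hpm0 : 0 ≤ pmax) (hpm1 : pmax ≤ 1)
    (ω : ℝ) (hω : ω = (K : ℝ) / N)
    (p : Fin N → ℝ)
    (hp : ∀ i : Fin N, p i = if (i : ℕ) < K then (1 - pmax) / K else pmax / (N - K)) :
    ∑ i, (p i - 1 / N) ^ 2 = (1 / N) * (pmax + ω - 1) ^ 2 / (ω * (1 - ω)) :=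
  DSQ_two_level_family_general (fun i : Fin N ↦ (i : ℕ) < K) (Fintype.card_fin N)
    (by rw [Fin.card_filter_val_lt]; omega) hK1 (by omega) pmax ω hω p hp
end

section
/- Let N ≥ 2, let K be an integer with 1 ≤ K ≤ N−1, let 0 ≤ p_max ≤ 1, and set ω = K/N. Assume 1 − p_max ≤ ω (equivalently (1−p_max)/K ≤ 1/N ≤ p_max/(N−K)). Let p be the discrete probability distribution on N points with p_i = (1−p_max)/K for i = 1, …, K and p_i = p_max/(N−K) for i = K+1, …, N, and let q = (1/N, …, 1/N) be the uniform distribution. Then the total variation TV(p,q) = (1/2)·∑_{i=1}^N |p_i − 1/N| equals p_max + ω − 1, and hence the disequilibrium D_TV(p) = TV(p,q)² equals (p_max + ω − 1)². -/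
/-!
The two-level distribution and the uniform one have the same total mass, so the excess of the former
over the latter on the upper level equals its deficit on the lower level. The total variation is
half the sum of the two, hence it is the deficit alone: `K * (1 / N - (1 - pmax) / K)`.
-/

open Finset in
theorem sum_abs_sub_eq_two_nsmul_sum_filter {ι G : Type*} [AddCommGroup G] [LinearOrder G]
    [IsOrderedAddMonoid G] {s : Finset ι} {f g : ι → G} (P : ι → Prop) [DecidablePred P]
    (hsum : ∑ i ∈ s, f i = ∑ i ∈ s, g i) (hle : ∀ i ∈ s, P i → f i ≤ g i)
    (hge : ∀ i ∈ s, ¬P i → g i ≤ f i) :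
    ∑ i ∈ s, |f i - g i| = 2 • ∑ i ∈ s with P i, (g i - f i) := by
  have excess_eq_deficit :
      ∑ i ∈ s with ¬P i, (f i - g i) = ∑ i ∈ s with P i, (g i - f i) := by
    rw [← sum_filter_add_sum_filter_not s P f, ← sum_filter_add_sum_filter_not s P g] at hsum
    rw [sum_sub_distrib, sum_sub_distrib, sub_eq_sub_iff_add_eq_add, add_comm, hsum]
  calc ∑ i ∈ s, |f i - g i|
      = ∑ i ∈ s with P i, |f i - g i| + ∑ i ∈ s with ¬P i, |f i - g i| :=
        (sum_filter_add_sum_filter_not s P _).symm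
    _ = ∑ i ∈ s with P i, (g i - f i) + ∑ i ∈ s with ¬P i, (f i - g i) := by
        congr 1 <;> refine sum_congr rfl fun i hi ↦ ?_ <;> rw [mem_filter] at hi
        · rw [abs_of_nonpos (sub_nonpos.2 (hle i hi.1 hi.2)), neg_sub]
        · rw [abs_of_nonneg (sub_nonneg.2 (hge i hi.1 hi.2))]
    _ = 2 • ∑ i ∈ s with P i, (g i - f i) := by rw [excess_eq_deficit, two_nsmul]

open Finset in
theorem sum_ite_div_card {ι 𝕜 : Type*} [DivisionRing 𝕜] [CharZero 𝕜] {s : Finset ι}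
    {P : ι → Prop} [DecidablePred P] (hpos : 0 < #{i ∈ s | P i}) (hlt : #{i ∈ s | P i} < #s)
    (a b : 𝕜) :
    ∑ i ∈ s, (if P i then a / #{i ∈ s | P i} else b / (#s - #{i ∈ s | P i})) = a + b := by
  have hcard : (#{i ∈ s | ¬P i} : 𝕜) = #s - #{i ∈ s | P i} := by
    rw [eq_sub_iff_add_eq', ← Nat.cast_add, card_filter_add_card_filter_not]
  have hpos' : (#{i ∈ s | P i} : 𝕜) ≠ 0 := Nat.cast_ne_zero.2 hpos.ne'
  have hsub : (#s : 𝕜) - #{i ∈ s | P i} ≠ 0 := sub_ne_zero.2 (Nat.cast_injective.ne hlt.ne')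
  rw [sum_ite, sum_const, sum_const, nsmul_eq_mul', nsmul_eq_mul', hcard,
    div_mul_cancel₀ _ hpos', div_mul_cancel₀ _ hsub]

theorem one_div_le_div_sub_iff_one_sub_le_div {𝕜 : Type*} [Field 𝕜] [LinearOrder 𝕜]
    [IsStrictOrderedRing 𝕜] {k n : 𝕜} (hn : n ≠ 0) (hkn : k < n) (b : 𝕜) :
    1 / n ≤ b / (n - k) ↔ 1 - b ≤ k / n := by
  rw [le_div_iff₀ (sub_pos.2 hkn), one_div_mul_eq_div, sub_div, div_self hn, sub_le_comm]

open Finset in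
theorem DTV_two_level_family_general {ι 𝕜 : Type*} [Fintype ι] [Field 𝕜] [LinearOrder 𝕜]
    [IsStrictOrderedRing 𝕜] (P : ι → Prop) [DecidablePred P] {N K : ℕ}
    (hN : Fintype.card ι = N) (hK : #{i | P i} = K) (hK0 : 0 < K) (hKN : K < N)
    {pmax ω : 𝕜} (hω : ω = (K : 𝕜) / N) (hord : 1 - pmax ≤ ω) {p : ι → 𝕜}
    (hp : ∀ i, p i = if P i then (1 - pmax) / K else pmax / (N - K)) :
    (1 / 2) * ∑ i, |p i - 1 / N| = pmax + ω - 1 ∧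
      ((1 / 2) * ∑ i, |p i - 1 / N|) ^ 2 = (pmax + ω - 1) ^ 2 := by
  have hK0' : (0 : 𝕜) < K := Nat.cast_pos.2 hK0
  have hKN' : (K : 𝕜) < N := Nat.cast_lt.2 hKN
  have hN0' : (N : 𝕜) ≠ 0 := (hK0'.trans hKN').ne'
  have mass_eq : ∑ i, p i = ∑ _i : ι, 1 / (N : 𝕜) := by
    subst hN hK
    simp_rw [hp, ← card_univ, sum_ite_div_card hK0 hKN, sum_const, nsmul_eq_mul, sub_add_cancel]
    rw [card_univ, mul_one_div_cancel hN0']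
  have lower_le (i) (_ : i ∈ univ) (hi : P i) : p i ≤ 1 / (N : 𝕜) := by
    rw [hp, if_pos hi, div_le_iff₀ hK0', one_div_mul_eq_div, ← hω]
    exact hord
  have le_upper (i) (_ : i ∈ univ) (hi : ¬P i) : 1 / (N : 𝕜) ≤ p i := by
    rw [hp, if_neg hi, one_div_le_div_sub_iff_one_sub_le_div hN0' hKN', ← hω]
    exact hord
  have deficit : ∑ i with P i, (1 / (N : 𝕜) - p i) = pmax + ω - 1 := by
    have hterm : ∀ i ∈ ({i | P i} : Finset ι), 1 / (N : 𝕜) - p i = 1 / N - (1 - pmax) / K :=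
      fun i hi ↦ by rw [hp, if_pos (mem_filter.1 hi).2]
    rw [sum_congr rfl hterm, sum_const, hK, nsmul_eq_mul, hω]
    field_simp
    ring
  have tv_eq : (1 / 2) * ∑ i, |p i - 1 / N| = pmax + ω - 1 := by
    rw [sum_abs_sub_eq_two_nsmul_sum_filter P mass_eq lower_le le_upper, deficit, nsmul_eq_mul]
    ring
  exact ⟨tv_eq, by rw [tv_eq]⟩

open Finset in
/-- If `1 − p_max ≤ ω`, the total variation between the two-level distribution
and the uniform distribution is `TV(p,q) = p_max + ω − 1`, hence the
disequilibrium `D_TV(p) = TV(p,q)²` equals `(p_max + ω − 1)²`. -/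
theorem DTV_two_level_family
    (N K : ℕ) (hN : 2 ≤ N) (hK1 : 1 ≤ K) (hKN : K ≤ N - 1)
    (pmax : ℝ) (hpm0 : 0 ≤ pmax) (hpm1 : pmax ≤ 1)
    (ω : ℝ) (hω : ω = (K : ℝ) / N) (hord : 1 - pmax ≤ ω)
    (p : Fin N → ℝ)
    (hp : ∀ i : Fin N, p i = if (i : ℕ) < K then (1 - pmax) / K else pmax / (N - K)) :
    (1 / 2) * ∑ i, |p i - 1 / N| = pmax + ω - 1 ∧
      ((1 / 2) * ∑ i, |p i - 1 / N|) ^ 2 = (pmax + ω - 1) ^ 2 :=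
  DTV_two_level_family_general (fun i : Fin N ↦ (i : ℕ) < K) (Fintype.card_fin N)
    (by rw [Fin.card_filter_val_lt, min_eq_right (by omega)]) hK1 (by omega) hω hord hp
end

section
/- Let p and q be discrete probability distributions on N points. Then the Jensen–Shannon divergence is bounded by the total variation: JSD(p||q) ≤ TV(p,q), where JSD(p||q) = (1/2)·∑_{i=1}^N p_i·log(p_i/m_i) + (1/2)·∑_{i=1}^N q_i·log(q_i/m_i) with m = (p+q)/2 (natural logarithm, with summands involving p_i = 0 or q_i = 0 interpreted as 0), and TV(p,q) = (1/2)·∑_{i=1}^N |p_i − q_i|. -/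
/-!
By `log t ≤ t - 1`, each relative entropy to the midpoint is at most the corresponding `χ²`-type
sum. The two sums add up to the triangular discrimination `∑ (p - q)² / (p + q)`, and each of its
terms is at most `|p - q|` because `|p - q| ≤ p + q`.
-/

theorem mul_log_div_le_mul_div_sub_one {x y : ℝ} (hx : 0 ≤ x) (hy : 0 < y) :
    x * Real.log (x / y) ≤ x * (x / y - 1) := by
  obtain rfl | hx_pos := hx.eq_or_lt
  · simp
  · exact mul_le_mul_of_nonneg_left (Real.log_le_sub_one_of_pos (div_pos hx_pos hy)) hx

theorem mul_log_div_midpoint_add_le_sq_sub_div_add {a b : ℝ} (ha : 0 ≤ a) (hb : 0 ≤ b) :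
    a * Real.log (a / ((a + b) / 2)) + b * Real.log (b / ((a + b) / 2)) ≤
      (a - b) ^ 2 / (a + b) := by
  obtain h_zero | h_pos := (add_nonneg ha hb).eq_or_lt
  · simp [← h_zero]
  · have h_mid : 0 < (a + b) / 2 := half_pos h_pos
    calc a * Real.log (a / ((a + b) / 2)) + b * Real.log (b / ((a + b) / 2))
        ≤ a * (a / ((a + b) / 2) - 1) + b * (b / ((a + b) / 2) - 1) :=
          add_le_add (mul_log_div_le_mul_div_sub_one ha h_mid)
            (mul_log_div_le_mul_div_sub_one hb h_mid)
      _ = (a - b) ^ 2 / (a + b) := by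
          field_simp
          ring

theorem sq_sub_div_add_le_abs_sub {K : Type*} [Field K] [LinearOrder K] [IsStrictOrderedRing K]
    {a b : K} (ha : 0 ≤ a) (hb : 0 ≤ b) : (a - b) ^ 2 / (a + b) ≤ |a - b| := by
  have h_abs : |a - b| ≤ a + b := abs_le.2 ⟨by linarith, by linarith⟩
  refine div_le_of_le_mul₀ (add_nonneg ha hb) (abs_nonneg _) ?_
  calc (a - b) ^ 2 = |a - b| * |a - b| := by rw [abs_mul_abs_self, sq]
    _ ≤ |a - b| * (a + b) := mul_le_mul_of_nonneg_left h_abs (abs_nonneg _)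

theorem JSD_le_TV_general {ι : Type*} (s : Finset ι) {p q : ι → ℝ}
    (hp : ∀ i ∈ s, 0 ≤ p i) (hq : ∀ i ∈ s, 0 ≤ q i) :
    (1 / 2) * ∑ i ∈ s, p i * Real.log (p i / ((p i + q i) / 2))
        + (1 / 2) * ∑ i ∈ s, q i * Real.log (q i / ((p i + q i) / 2))
      ≤ (1 / 2) * ∑ i ∈ s, |p i - q i| := by
  rw [← mul_add, ← Finset.sum_add_distrib]
  gcongr with i hi
  exact (mul_log_div_midpoint_add_le_sq_sub_div_add (hp i hi) (hq i hi)).trans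
    (sq_sub_div_add_le_abs_sub (hp i hi) (hq i hi))

open Finset in
/-- The Jensen–Shannon divergence between two discrete probability
distributions is bounded above by their total variation:
`JSD(p‖q) ≤ TV(p,q)`. -/
theorem JSD_le_TV
    (N : ℕ) (p q : Fin N → ℝ)
    (hp0 : ∀ i, 0 ≤ p i) (hq0 : ∀ i, 0 ≤ q i)
    (hpsum : ∑ i, p i = 1) (hqsum : ∑ i, q i = 1) :
    (1 / 2) * ∑ i, p i * Real.log (p i / ((p i + q i) / 2))
        + (1 / 2) * ∑ i, q i * Real.log (q i / ((p i + q i) / 2))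
      ≤ (1 / 2) * ∑ i, |p i - q i| := by
  exact JSD_le_TV_general Finset.univ (fun i _ => hp0 i) (fun i _ => hq0 i)
end

section
/- Let N ≥ 3, let K be an integer with 1 ≤ K ≤ N−1, and let p = (p_1, …, p_N) be a vector of real numbers with 0 < p_i < 1 for all i and ∑_{i=1}^N p_i = 1. Let D = ((1/2)·∑_{i=1}^N |p_i − 1/N|)² and let H(p) = −(1/log N)·∑_{i=1}^N p_i·log p_i. Suppose D > 0, H(p) > 0, and the stationarity equations hold: for each i = 1, …, K, −(1/log N)·(log p_i − log p_N)·D − 2·H(p)·√D = 0, and for each i = K+1, …, N−1, −(1/log N)·(log p_i − log p_N)·D = 0. Then p_i = p_j for all i, j ∈ {1, …, K} and p_i = p_N for all i ∈ {K+1, …, N}; that is, p belongs to the two-level family assigning a common value (1−p_max)/K to the first K components and a common value p_max/(N−K) to the remaining N−K components for some p_max. -/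
/-!
For a fixed level `ℓ = log p_N` and a fixed shift, each stationarity equation says that an affine
function of `log p_i` vanishes, so it has at most one positive solution. All components in the
first block solve the same equation, and in the second block `p_N` itself solves the equation of
the others, as it has no shift; hence `p` is constant on each block. A function constant on a block
equals its sum over that block divided by the size of the block, and `p_max` is the mass of the
second block.
-/

theorem injOn_mul_log_sub_mul_sub {a D : ℝ} (ha : a ≠ 0) (hD : D ≠ 0) (ℓ m : ℝ) :
    Set.InjOn (fun x ↦ a * (Real.log x - ℓ) * D - m) (Set.Ioi 0) := by
  intro x hx y hy hxy
  have hlog : a * D * Real.log x = a * D * Real.log y := by linear_combination hxy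
  exact Real.log_injOn_pos hx hy (mul_left_cancel₀ (mul_ne_zero ha hD) hlog)

section ConstantOnBlocks

variable {ι F : Type*} [DivisionRing F] [CharZero F] {s : Finset ι} {f : ι → F}

theorem eq_sum_div_card_of_forall_eq (hf : ∀ i ∈ s, ∀ j ∈ s, f i = f j) {i : ι} (hi : i ∈ s) :
    f i = (∑ j ∈ s, f j) / s.card := by
  have hcard : (s.card : F) ≠ 0 := Nat.cast_ne_zero.mpr (Finset.card_ne_zero_of_mem hi)
  rw [eq_div_iff hcard, Finset.sum_eq_card_nsmul fun j hj ↦ hf j hj i hi, nsmul_eq_mul,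
    Nat.cast_comm]

theorem exists_eq_div_card_and_eq_div_card_compl [Fintype ι] [DecidableEq ι]
    (hs : ∀ i ∈ s, ∀ j ∈ s, f i = f j) (hsc : ∀ i ∈ sᶜ, ∀ j ∈ sᶜ, f i = f j) :
    ∃ m : F, (∀ i ∈ s, f i = (∑ j, f j - m) / s.card) ∧ ∀ i ∈ sᶜ, f i = m / sᶜ.card := by
  refine ⟨∑ j ∈ sᶜ, f j, fun i hi ↦ ?_, fun i hi ↦ eq_sum_div_card_of_forall_eq hsc hi⟩
  rw [← Finset.sum_add_sum_compl s f, add_sub_cancel_right]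
  exact eq_sum_div_card_of_forall_eq hs hi

theorem exists_eq_div_and_eq_div_sub_of_initial_segment {N K : ℕ} (hKN : K ≤ N) {g : Fin N → F}
    (hlow : ∀ i j : Fin N, (i : ℕ) < K → (j : ℕ) < K → g i = g j)
    (hhigh : ∀ i j : Fin N, K ≤ (i : ℕ) → K ≤ (j : ℕ) → g i = g j) :
    ∃ m : F, (∀ i : Fin N, (i : ℕ) < K → g i = (∑ j, g j - m) / K) ∧
      ∀ i : Fin N, K ≤ (i : ℕ) → g i = m / (N - K) := by
  let below : Finset (Fin N) := {i | (i : ℕ) < K}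
  have mem_below (i : Fin N) : i ∈ below ↔ (i : ℕ) < K := by simp [below]
  have mem_compl (i : Fin N) : i ∈ belowᶜ ↔ K ≤ (i : ℕ) := by simp [below]
  have card_below : below.card = K := Fin.card_filter_val_lt.trans (min_eq_right hKN)
  obtain ⟨m, hm_low, hm_high⟩ := exists_eq_div_card_and_eq_div_card_compl (s := below) (f := g)
    (by simpa only [mem_below] using fun i hi j hj ↦ hlow i j hi hj)
    (by simpa only [mem_compl] using fun i hi j hj ↦ hhigh i j hi hj)
  rw [Finset.card_compl, Fintype.card_fin, card_below, Nat.cast_sub hKN] at hm_high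
  simp only [mem_below, mem_compl, card_below] at hm_low hm_high
  exact ⟨m, hm_low, hm_high⟩

end ConstantOnBlocks

open Finset in
/-- If a strictly interior distribution `p` on `N ≥ 3` points satisfies the
first-order stationarity conditions of the total-variation complexity
`C_TV = H · D_TV` (with `p_N` eliminated) on the region where the first `K`
components lie below `1/N` and the rest above, then `p` belongs to the
two-level family: the first `K` components share a common value `(1−p_max)/K`
and the remaining `N−K` components share the value `p_max/(N−K)`. -/
theorem CTV_stationary_two_level
    (N K : ℕ) (hN : 3 ≤ N) (hK1 : 1 ≤ K) (hKN : K ≤ N - 1)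
    (p : Fin N → ℝ) (hp0 : ∀ i, 0 < p i) (hp1 : ∀ i, p i < 1)
    (hsum : ∑ i, p i = 1)
    (D : ℝ) (hD : D = ((1 / 2) * ∑ i, |p i - 1 / N|) ^ 2)
    (H : ℝ) (hH : H = -(1 / Real.log N) * ∑ i, p i * Real.log (p i))
    (hDpos : 0 < D) (hHpos : 0 < H)
    (hstat1 : ∀ i : Fin N, (i : ℕ) < K →
      -(1 / Real.log N) * (Real.log (p i) - Real.log (p ⟨N - 1, by omega⟩)) * D
        - 2 * H * Real.sqrt D = 0)
    (hstat2 : ∀ i : Fin N, K ≤ (i : ℕ) → (i : ℕ) ≠ N - 1 →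
      -(1 / Real.log N) * (Real.log (p i) - Real.log (p ⟨N - 1, by omega⟩)) * D = 0) :
    (∀ i j : Fin N, (i : ℕ) < K → (j : ℕ) < K → p i = p j) ∧
      (∀ i : Fin N, K ≤ (i : ℕ) → p i = p ⟨N - 1, by omega⟩) ∧
      ∃ pmax : ℝ,
        (∀ i : Fin N, (i : ℕ) < K → p i = (1 - pmax) / K) ∧
        (∀ i : Fin N, K ≤ (i : ℕ) → p i = pmax / (N - K)) := by
  have hlog : Real.log N ≠ 0 := (Real.log_pos (by exact_mod_cast (by omega : 1 < N))).ne'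
  have hunique := injOn_mul_log_sub_mul_sub (neg_ne_zero.mpr (one_div_ne_zero hlog)) hDpos.ne'
    (Real.log (p ⟨N - 1, by omega⟩))
  have hlow : ∀ i j : Fin N, (i : ℕ) < K → (j : ℕ) < K → p i = p j := fun i j hi hj ↦
    hunique _ (hp0 i) (hp0 j) ((hstat1 i hi).trans (hstat1 j hj).symm)
  have hhigh : ∀ i : Fin N, K ≤ (i : ℕ) → p i = p ⟨N - 1, by omega⟩ := by
    intro i hi
    by_cases hlast : (i : ℕ) = N - 1
    · exact congrArg p (Fin.ext hlast)
    · refine hunique 0 (hp0 i) (hp0 _) ?_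
      simpa only [sub_self, mul_zero, zero_mul, sub_zero] using hstat2 i hi hlast
  obtain ⟨pmax, hpmax⟩ := exists_eq_div_and_eq_div_sub_of_initial_segment (by omega) hlow
    fun i j hi hj ↦ (hhigh i hi).trans (hhigh j hj).symm
  rw [hsum] at hpmax
  exact ⟨hlow, hhigh, pmax, hpmax⟩
end
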